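/- For every positive integer n, the number of (x,y) ∈ ℤ² with x² + xy + 52y² = n plus twice the number of (x,y) ∈ ℤ² with 4x² + xy + 13y² = n equals A(n) − 2A(n/3) + 3A(n/9) + B(n), where A(m) = ∑_{d|m}(−23/d), B(m) = ∑_{d|m}(69/d)((m/d)/3), and A(m/k), B(m/k) are interpreted as 0 when k ∤ m. -/

import Mathlib

/-- The Kronecker symbol `(a/n)` for `n : ℕ`, built from the Jacobi symbol and
the standard value at `2` (`0` if `a` even, `1` if `a ≡ ±1 (mod 8)`, `-1` otherwise). -/
def kron (a : ℤ) (n : ℕ) : ℤ :=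
  (if a % 2 = 0 then 0 else if a % 8 = 1 ∨ a % 8 = 7 then 1 else -1) ^ (n.factorization 2) *
    jacobiSym a (n / 2 ^ (n.factorization 2))

instance : Fact (Nat.Prime 3) := ⟨by norm_num⟩

/-- `A n = ∑_{d ∣ n} (-23/d)`. -/
def A (n : ℕ) : ℤ := ∑ d ∈ n.divisors, kron (-23) d

/-- `B n = ∑_{d ∣ n} (69/d) · ((n/d)/3)`, with `(·/3)` the Legendre symbol mod 3. -/
def B (n : ℕ) : ℤ := ∑ d ∈ n.divisors, kron 69 d * legendreSym 3 ((n / d : ℕ) : ℤ)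

/-!
Reduction theory shows that every positive definite form of discriminant `D` is equivalent to
exactly one reduced form, uniquely up to sign when the minimum is taken only at `±(1, 0)`.
Completing primitive vectors to matrices of `SL(2, ℤ)` therefore shows that the reduced forms
together have `2` primitive representations of `m` for each root of `t² + t + q` modulo `m`, where
`D = 1 - 4q`. Comparing with `∑ (D/d)` on prime powers gives Dirichlet's formula; for `D = -23` the
total number of representations is `2 A n`.

The two forms of discriminant `-207 = 9 · (-23)` are restrictions of forms of discriminant `-23` to
sublattices of index `3`. Modulo `3` the latter become `x² - y²`, so the representations of `n` by
the former are those of `n` if `n ≡ 1`, those of `n / 9` if `9 ∣ n`, and none otherwise. The right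
hand side has the same values because `69 = (-23)(-3)` gives `B n = (n/3) A n`, while `(-23/3) = 1`
makes `k ↦ A (3 ^ k m)` an arithmetic progression.
-/

open Matrix MatrixGroups Polynomial ArithmeticFunction.zeta

/-! ### Binary quadratic forms -/

/-- The integral binary quadratic form `a x² + b x y + c y²`. -/
@[ext]
structure BinaryForm where
  a : ℤ
  b : ℤ
  c : ℤ
deriving DecidableEq

namespace BinaryForm

variable (f g : BinaryForm)

/-- The value of a form at `(x, y)`. -/
def eval (x y : ℤ) : ℤ := f.a * x ^ 2 + f.b * (x * y) + f.c * y ^ 2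

/-- The discriminant `b² - 4ac`. -/
def disc : ℤ := f.b ^ 2 - 4 * f.a * f.c

/-- Positive definiteness, expressed through the leading coefficient and the discriminant. -/
structure PosDef : Prop where
  a_pos : 0 < f.a
  disc_neg : f.disc < 0

variable {f g}

theorem ext_of_disc (ha : f.a ≠ 0) (haa : f.a = g.a) (hb : f.b = g.b) (hD : f.disc = g.disc) :
    f = g := by
  refine BinaryForm.ext haa hb (mul_left_cancel₀ (mul_ne_zero four_ne_zero ha) ?_)
  rw [disc, disc, ← haa, ← hb] at hD
  linarith

theorem PosDef.c_pos (hf : f.PosDef) : 0 < f.c := by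
  have h := hf.disc_neg
  rw [disc] at h
  exact pos_of_mul_pos_right (by nlinarith [sq_nonneg f.b] : 0 < f.a * f.c) hf.a_pos.le

theorem four_mul_a_mul_eval (f : BinaryForm) (x y : ℤ) :
    4 * f.a * f.eval x y = (2 * f.a * x + f.b * y) ^ 2 - f.disc * y ^ 2 := by
  simp only [eval, disc]; ring

theorem four_mul_c_mul_eval (f : BinaryForm) (x y : ℤ) :
    4 * f.c * f.eval x y = (f.b * x + 2 * f.c * y) ^ 2 - f.disc * x ^ 2 := by
  simp only [eval, disc]; ring

theorem PosDef.eval_pos (hf : f.PosDef) {x y : ℤ} (h : x ≠ 0 ∨ y ≠ 0) : 0 < f.eval x y := by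
  rcases h with hx | hy
  · have := mul_pos (neg_pos.mpr hf.disc_neg) (sq_pos_of_ne_zero hx)
    refine pos_of_mul_pos_right (a := 4 * f.c) ?_ (by linarith [hf.c_pos])
    linarith [four_mul_c_mul_eval f x y, sq_nonneg (f.b * x + 2 * f.c * y)]
  · have := mul_pos (neg_pos.mpr hf.disc_neg) (sq_pos_of_ne_zero hy)
    refine pos_of_mul_pos_right (a := 4 * f.a) ?_ (by linarith [hf.a_pos])
    linarith [four_mul_a_mul_eval f x y, sq_nonneg (2 * f.a * x + f.b * y)]

/-- `SL(2, ℤ)` acts on forms by `(γ • f) (v) = f (v γ)`, where `v` is a row vector. The first row of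
`γ` is thus the vector at which `f` takes the leading coefficient of `γ • f` as its value. -/
instance : MulAction SL(2, ℤ) BinaryForm where
  smul γ f :=
    ⟨f.eval (γ 0 0) (γ 0 1),
      2 * f.a * (γ 0 0 * γ 1 0) + f.b * (γ 0 0 * γ 1 1 + γ 0 1 * γ 1 0) +
        2 * f.c * (γ 0 1 * γ 1 1),
      f.eval (γ 1 0) (γ 1 1)⟩
  one_smul f := by ext <;> simp [eval, HSMul.hSMul]
  mul_smul γ δ f := by
    ext <;> simp [eval, HSMul.hSMul, Matrix.mul_apply, Fin.sum_univ_two] <;> ring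

theorem smul_a (γ : SL(2, ℤ)) (f : BinaryForm) : (γ • f).a = f.eval (γ 0 0) (γ 0 1) := rfl

theorem smul_b (γ : SL(2, ℤ)) (f : BinaryForm) :
    (γ • f).b = 2 * f.a * (γ 0 0 * γ 1 0) + f.b * (γ 0 0 * γ 1 1 + γ 0 1 * γ 1 0) +
      2 * f.c * (γ 0 1 * γ 1 1) := rfl

theorem smul_c (γ : SL(2, ℤ)) (f : BinaryForm) : (γ • f).c = f.eval (γ 1 0) (γ 1 1) := rfl

theorem neg_smul (γ : SL(2, ℤ)) (f : BinaryForm) : (-γ) • f = γ • f := by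
  ext <;> simp [smul_a, smul_b, smul_c, eval]

theorem det_eq_one (γ : SL(2, ℤ)) : γ 0 0 * γ 1 1 - γ 0 1 * γ 1 0 = 1 := by
  rw [← Matrix.det_fin_two, γ.det_coe]

theorem eval_smul (γ : SL(2, ℤ)) (f : BinaryForm) (x y : ℤ) :
    (γ • f).eval x y = f.eval (x * γ 0 0 + y * γ 1 0) (x * γ 0 1 + y * γ 1 1) := by
  simp only [eval, smul_a, smul_b, smul_c]; ring

theorem disc_smul (γ : SL(2, ℤ)) (f : BinaryForm) : (γ • f).disc = f.disc := by
  have hdet : (γ • f).disc = (γ 0 0 * γ 1 1 - γ 0 1 * γ 1 0) ^ 2 * f.disc := by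
    simp only [disc, smul_a, smul_b, smul_c, eval]; ring
  rw [hdet, det_eq_one, one_pow, one_mul]

theorem PosDef.smul (hf : f.PosDef) (γ : SL(2, ℤ)) : (γ • f).PosDef where
  a_pos := by
    refine hf.eval_pos ?_
    by_contra! h
    simpa [h.1, h.2] using det_eq_one γ
  disc_neg := (disc_smul γ f).symm ▸ hf.disc_neg

/-! ### Reduction theory -/

/-- The matrix `(1 0; k 1)`, which acts on forms by the substitution `x ↦ x + k y`. -/
def translation (k : ℤ) : SL(2, ℤ) := ⟨!![1, 0; k, 1], by simp⟩

theorem coe_translation (k : ℤ) :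
    (translation k : Matrix (Fin 2) (Fin 2) ℤ) = !![1, 0; k, 1] := rfl

theorem translation_smul_a (k : ℤ) (f : BinaryForm) : (translation k • f).a = f.a := by
  rw [smul_a]
  simp [coe_translation, eval]

theorem translation_smul_b (k : ℤ) (f : BinaryForm) :
    (translation k • f).b = f.b + k * (2 * f.a) := by
  have h : translation k 0 0 = 1 ∧ translation k 0 1 = 0 ∧ translation k 1 0 = k ∧
      translation k 1 1 = 1 := by simp [coe_translation]
  rw [smul_b, h.1, h.2.1, h.2.2.1, h.2.2.2]
  ring

theorem S_smul_a (f : BinaryForm) : (ModularGroup.S • f).a = f.c := by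
  rw [smul_a]
  simp [ModularGroup.S, eval]

theorem translation_mul_zero (k : ℤ) (γ : SL(2, ℤ)) (j : Fin 2) :
    (translation k * γ) 0 j = γ 0 j := by
  simp [coe_translation, Matrix.mul_apply, Fin.sum_univ_two]

theorem translation_mul_one (k : ℤ) (γ : SL(2, ℤ)) (j : Fin 2) :
    (translation k * γ) 1 j = k * γ 0 j + γ 1 j := by
  simp [coe_translation, Matrix.mul_apply, Fin.sum_univ_two]

theorem translation_zero : translation 0 = 1 := by
  ext i j
  fin_cases i <;> fin_cases j <;> simp [coe_translation]

theorem exists_eq_translation_mul {γ δ : SL(2, ℤ)} (h : γ 0 = δ 0) :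
    ∃ k, δ = translation k * γ := by
  have hγ := det_eq_one γ
  have hδ := det_eq_one δ
  rw [← h] at hδ
  refine ⟨δ 1 0 * γ 1 1 - δ 1 1 * γ 1 0, ?_⟩
  refine Matrix.SpecialLinearGroup.ext _ _ (Fin.forall_fin_two.mpr
    ⟨fun j => ?_, Fin.forall_fin_two.mpr ⟨?_, ?_⟩⟩)
  · rw [translation_mul_zero, h]
  · rw [translation_mul_one]
    linear_combination (-δ 1 0) * hγ + γ 1 0 * hδ
  · rw [translation_mul_one]
    linear_combination (-δ 1 1) * hγ + γ 1 1 * hδ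

variable (f) in
/-- A reduced form: `-a < b ≤ a ≤ c`. The usual convention `0 ≤ b` when `a = c` is not imposed,
so reduced representatives of a class are unique only away from this boundary. -/
structure IsReduced : Prop where
  neg_a_lt_b : -f.a < f.b
  b_le_a : f.b ≤ f.a
  a_le_c : f.a ≤ f.c

theorem IsReduced.a_pos (hf : f.IsReduced) : 0 < f.a := by
  linarith [hf.neg_a_lt_b, hf.b_le_a]

theorem IsReduced.three_mul_sq_le (hf : f.IsReduced) : 3 * f.a ^ 2 ≤ -f.disc := by
  have hb : f.b ^ 2 ≤ f.a ^ 2 := sq_le_sq' hf.neg_a_lt_b.le hf.b_le_a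
  have hc := mul_le_mul_of_nonneg_left hf.a_le_c hf.a_pos.le
  rw [disc]
  linarith

theorem IsReduced.posDef (hf : f.IsReduced) : f.PosDef :=
  ⟨hf.a_pos, by linarith [hf.three_mul_sq_le, pow_pos hf.a_pos 2]⟩

theorem PosDef.exists_smul_isReduced (hf : f.PosDef) : ∃ γ : SL(2, ℤ), (γ • f).IsReduced := by
  let γ := Function.argmin fun γ : SL(2, ℤ) => (γ • f).a.toNat
  have hγ : ∀ δ : SL(2, ℤ), (γ • f).a ≤ (δ • f).a := fun δ => by
    have h : (γ • f).a.toNat ≤ (δ • f).a.toNat :=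
      Function.argmin_le (fun γ : SL(2, ℤ) => (γ • f).a.toNat) δ
    have := (hf.smul δ).a_pos
    omega
  have ha := (hf.smul γ).a_pos
  obtain ⟨k, ⟨hk₁, hk₂⟩, -⟩ :=
    existsUnique_add_zsmul_mem_Ioc (by linarith : 0 < 2 * (γ • f).a) (γ • f).b (-(γ • f).a)
  rw [smul_eq_mul] at hk₁ hk₂
  refine ⟨translation k * γ, ?_, ?_, ?_⟩
  · rwa [mul_smul, translation_smul_a, translation_smul_b]
  · rw [mul_smul, translation_smul_a, translation_smul_b]; linarith
  · have := hγ (ModularGroup.S * (translation k * γ))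
    rwa [mul_smul _ (_ * _), S_smul_a, ← translation_smul_a k, ← mul_smul] at this

theorem IsReduced.c_le_eval (hf : f.IsReduced) (x : ℤ) {y : ℤ} (hy : y ≠ 0) :
    f.c ≤ f.eval x y := by
  have ha := hf.a_pos
  have hy₁ : 1 ≤ |y| := Int.one_le_abs hy
  have hb : -(f.a * (|x| * |y|)) ≤ f.b * (x * y) := by
    have hb' : |f.b| ≤ f.a := abs_le.mpr ⟨hf.neg_a_lt_b.le, hf.b_le_a⟩
    have := mul_le_mul_of_nonneg_right hb' (abs_nonneg (x * y))
    rw [← abs_mul]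
    linarith [neg_abs_le (f.b * (x * y)), abs_mul f.b (x * y)]
  rw [eval, ← sq_abs x, ← sq_abs y]
  have hac := hf.a_le_c
  have hx₀ := abs_nonneg x
  generalize |x| = u at *
  generalize |y| = v at *
  rcases le_or_gt v u with h | h
  · have h₁ : 0 ≤ f.a * (u * (u - v)) := by
      have := sub_nonneg.mpr h
      positivity
    have h₂ : f.c ≤ f.c * v ^ 2 := le_mul_of_one_le_right (by linarith) (one_le_pow₀ hy₁)
    linarith
  · have h₁ : f.a * (u * v) ≤ f.c * (u * v) := by gcongr
    have h₂ : 1 ≤ v * (v - u) := one_le_mul_of_one_le_of_one_le hy₁ (by linarith)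
    have h₃ : f.c ≤ f.c * (v * (v - u)) := le_mul_of_one_le_right (by linarith) h₂
    nlinarith [mul_nonneg ha.le (sq_nonneg u)]

theorem IsReduced.a_le_eval (hf : f.IsReduced) {x y : ℤ} (h : x ≠ 0 ∨ y ≠ 0) :
    f.a ≤ f.eval x y := by
  by_cases hy : y = 0
  · subst hy
    have hx : 0 < x ^ 2 := sq_pos_of_ne_zero (by simpa using h)
    have := le_mul_of_one_le_right hf.a_pos.le (Int.add_one_le_of_lt hx)
    simpa [eval] using this
  · exact hf.a_le_c.trans (hf.c_le_eval x hy)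

theorem IsReduced.a_le_smul_a (hf : f.IsReduced) (γ : SL(2, ℤ)) : f.a ≤ (γ • f).a := by
  refine hf.a_le_eval ?_
  by_contra! h
  simpa [h.1, h.2] using det_eq_one γ

theorem IsReduced.eq_one_of_smul {γ : SL(2, ℤ)} (hf : f.IsReduced) (hγf : (γ • f).IsReduced)
    (h₀ : γ 0 0 = 1) (h₁ : γ 0 1 = 0) : γ = 1 := by
  obtain ⟨k, rfl⟩ : ∃ k, γ = translation k * 1 :=
    exists_eq_translation_mul (funext (Fin.forall_fin_two.mpr ⟨by simp [h₀], by simp [h₁]⟩))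
  rw [mul_one] at hγf ⊢
  have hlt := hγf.neg_a_lt_b
  have hle := hγf.b_le_a
  rw [translation_smul_a, translation_smul_b] at hlt hle
  have ha := hf.a_pos
  have hk₁ : k * (2 * f.a) < 1 * (2 * f.a) := by linarith [hf.neg_a_lt_b]
  have hk₂ : -1 * (2 * f.a) < k * (2 * f.a) := by linarith [hf.b_le_a]
  have hk : k = 0 := by
    have := lt_of_mul_lt_mul_right hk₁ (by linarith)
    have := lt_of_mul_lt_mul_right hk₂ (by linarith)
    omega
  rw [hk, translation_zero]

theorem IsReduced.eq_one_or_eq_neg_one_of_smul {γ : SL(2, ℤ)} (hf : f.IsReduced)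
    (hac : f.a < f.c) (hγf : (γ • f).IsReduced) : γ = 1 ∨ γ = -1 := by
  have ha : f.eval (γ 0 0) (γ 0 1) ≤ f.a := by
    have := hγf.a_le_smul_a γ⁻¹
    rwa [inv_smul_smul] at this
  have h₁ : γ 0 1 = 0 := by
    by_contra h
    linarith [hf.c_le_eval (γ 0 0) h]
  have hdet : γ 0 0 * γ 1 1 = 1 := by simpa [h₁] using det_eq_one γ
  rcases Int.eq_one_or_neg_one_of_mul_eq_one hdet with h₀ | h₀
  · exact Or.inl (hf.eq_one_of_smul hγf h₀ h₁)
  · refine Or.inr (neg_eq_iff_eq_neg.mp (hf.eq_one_of_smul ?_ ?_ ?_))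
    · rwa [neg_smul]
    · simp [h₀]
    · simp [h₁]

theorem IsReduced.smul_eq_iff {γ : SL(2, ℤ)} (hf : f.IsReduced) (hac : f.a < f.c)
    (hg : g.IsReduced) : γ • f = g ↔ f = g ∧ (γ = 1 ∨ γ = -1) := by
  refine ⟨?_, ?_⟩
  · rintro rfl
    have hγ := hf.eq_one_or_eq_neg_one_of_smul hac hg
    exact ⟨by rcases hγ with rfl | rfl <;> simp [neg_smul], hγ⟩
  · rintro ⟨rfl, rfl | rfl⟩ <;> simp [neg_smul]

theorem sum_card_smul_eq {D : ℤ} {S : Finset BinaryForm}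
    (hS : ∀ f, f ∈ S ↔ f.IsReduced ∧ f.disc = D) (hac : ∀ f ∈ S, f.a < f.c)
    (hg : g.PosDef) (hD : g.disc = D) :
    ∑ f ∈ S, Nat.card {γ : SL(2, ℤ) // γ • f = g} = 2 := by
  obtain ⟨δ, hδ⟩ := hg.exists_smul_isReduced
  have hmem : δ • g ∈ S := (hS _).mpr ⟨hδ, (disc_smul δ g).trans hD⟩
  have hcongr : ∀ f, Nat.card {γ : SL(2, ℤ) // γ • f = g} =
      Nat.card {γ : SL(2, ℤ) // γ • f = δ • g} := fun f =>
    Nat.card_congr ((Equiv.mulLeft δ).subtypeEquiv fun γ => by simp [mul_smul])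
  have hsmul : ∀ f ∈ S, ∀ γ : SL(2, ℤ), γ • f = δ • g ↔ f = δ • g ∧ (γ = 1 ∨ γ = -1) :=
    fun f hf γ => ((hS f).mp hf).1.smul_eq_iff (hac f hf) hδ
  have hne : (1 : SL(2, ℤ)) ≠ -1 := fun h => by
    simpa using congr_arg (fun γ : SL(2, ℤ) => γ 0 0) h
  rw [Finset.sum_eq_single_of_mem _ hmem fun f hf hne => ?_, hcongr]
  · calc Nat.card {γ : SL(2, ℤ) // γ • δ • g = δ • g}
        = Nat.card ({1, -1} : Set SL(2, ℤ)) :=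
          Nat.card_congr (Equiv.subtypeEquivRight fun γ => by simp [hsmul _ hmem])
      _ = 2 := Set.ncard_pair hne
  · rw [hcongr, Nat.card_eq_zero]
    exact Or.inl ⟨fun γ => hne ((hsmul f hf _).mp γ.2).1⟩

end BinaryForm

/-! ### Representation numbers -/

namespace BinaryForm

variable {f g : BinaryForm}

/-- The number of representations of `n` by `f`; it is `0` by convention when there are infinitely
many, which cannot happen for a positive definite form. -/
noncomputable def numReps (f : BinaryForm) (n : ℤ) : ℕ :=
  Nat.card {v : ℤ × ℤ // f.eval v.1 v.2 = n}

/-- The number of primitive representations of `n` by `f`, i.e. those by coprime integers. -/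
noncomputable def numPrimReps (f : BinaryForm) (n : ℤ) : ℕ :=
  Nat.card {v : ℤ × ℤ // IsCoprime v.1 v.2 ∧ f.eval v.1 v.2 = n}

theorem PosDef.finite_reps (hf : f.PosDef) (n : ℤ) :
    {v : ℤ × ℤ | f.eval v.1 v.2 = n}.Finite := by
  refine ((Set.finite_Icc (-|4 * f.c * n|) |4 * f.c * n|).prod
    (Set.finite_Icc (-|4 * f.a * n|) |4 * f.a * n|)).subset ?_
  rintro ⟨x, y⟩ (rfl : f.eval x y = n)
  have abs_le_of_sq_add {u z N : ℤ} (h : N = u ^ 2 - f.disc * z ^ 2) : |z| ≤ |N| := by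
    have hz : z ^ 2 ≤ -f.disc * z ^ 2 :=
      le_mul_of_one_le_left (sq_nonneg z) (by linarith [hf.disc_neg])
    calc |z| ≤ z ^ 2 := sq_abs z ▸ Int.le_self_sq |z|
      _ ≤ N := by linarith [sq_nonneg u]
      _ ≤ |N| := le_abs_self N
  exact ⟨abs_le.mp (abs_le_of_sq_add (four_mul_c_mul_eval f x y)),
    abs_le.mp (abs_le_of_sq_add (four_mul_a_mul_eval f x y))⟩

theorem numReps_congr {n m : ℤ} (e : ℤ × ℤ ≃ ℤ × ℤ)
    (h : ∀ v, f.eval v.1 v.2 = n ↔ g.eval (e v).1 (e v).2 = m) : f.numReps n = g.numReps m :=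
  Nat.card_congr (e.subtypeEquiv h)

theorem numReps_smul (γ : SL(2, ℤ)) (f : BinaryForm) (n : ℤ) :
    (γ • f).numReps n = f.numReps n := by
  have hγ := det_eq_one γ
  refine numReps_congr
    ⟨fun v => (v.1 * γ 0 0 + v.2 * γ 1 0, v.1 * γ 0 1 + v.2 * γ 1 1),
      fun v => (v.1 * γ 1 1 - v.2 * γ 1 0, v.2 * γ 0 0 - v.1 * γ 0 1), ?_, ?_⟩
    fun v => by rw [eval_smul]; rfl
  · rintro ⟨x, y⟩
    ext
    · linear_combination x * hγ
    · linear_combination y * hγ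
  · rintro ⟨x, y⟩
    ext
    · linear_combination x * hγ
    · linear_combination y * hγ

theorem numReps_neg_b (a b c n : ℤ) : numReps ⟨a, -b, c⟩ n = numReps ⟨a, b, c⟩ n :=
  numReps_congr ((Equiv.neg ℤ).prodCongr (Equiv.refl ℤ)) fun v => by simp [eval]

theorem eval_mul_mul (f : BinaryForm) (s x y : ℤ) :
    f.eval (s * x) (s * y) = s ^ 2 * f.eval x y := by
  simp only [eval]; ring

theorem card_reps_gcd_eq (f : BinaryForm) {s : ℕ} (hs : 0 < s) (m : ℤ) :
    Nat.card {v : ℤ × ℤ // f.eval v.1 v.2 = s ^ 2 * m ∧ Int.gcd v.1 v.2 = s} =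
      f.numPrimReps m := by
  have hs' : (s : ℤ) ≠ 0 := by exact_mod_cast hs.ne'
  have hscale (v : {v : ℤ × ℤ // IsCoprime v.1 v.2 ∧ f.eval v.1 v.2 = m}) :
      f.eval (s * v.1.1) (s * v.1.2) = s ^ 2 * m ∧ Int.gcd (s * v.1.1) (s * v.1.2) = s := by
    obtain ⟨hco, heval⟩ := v.2
    rw [eval_mul_mul, heval, Int.gcd_mul_left, Int.isCoprime_iff_gcd_eq_one.mp hco]
    simp
  refine (Nat.card_eq_of_bijective (fun v => ⟨(s * v.1.1, s * v.1.2), hscale v⟩) ⟨?_, ?_⟩).symm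
  · rintro ⟨⟨x, y⟩, _⟩ ⟨⟨x', y'⟩, _⟩ h
    simp only [Subtype.mk.injEq, Prod.mk.injEq] at h ⊢
    exact ⟨mul_left_cancel₀ hs' h.1, mul_left_cancel₀ hs' h.2⟩
  · rintro ⟨⟨x, y⟩, heval, hgcd⟩
    obtain ⟨x', y', hco, hx, hy⟩ := Int.exists_gcd_one (hgcd ▸ hs)
    simp only [hgcd, mul_comm _ (s : ℤ)] at hx hy heval
    refine ⟨⟨(x', y'), Int.isCoprime_iff_gcd_eq_one.mpr hco, ?_⟩, by simp [hx, hy]⟩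
    rw [hx, hy, eval_mul_mul] at heval
    exact mul_left_cancel₀ (pow_ne_zero 2 hs') heval

theorem PosDef.numReps_eq_sum_numPrimReps (hf : f.PosDef) {n : ℕ} (hn : n ≠ 0) :
    f.numReps n = ∑ q ∈ n.divisorsAntidiagonal with IsSquare q.1, f.numPrimReps q.2 := by
  classical
  have hfin := hf.finite_reps n
  let content (v : ℤ × ℤ) : ℕ × ℕ := (Int.gcd v.1 v.2 ^ 2, n / Int.gcd v.1 v.2 ^ 2)
  have hdvd : ∀ v : ℤ × ℤ, f.eval v.1 v.2 = n → Int.gcd v.1 v.2 ^ 2 ∣ n := fun v hv => by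
    obtain ⟨x, hx⟩ := Int.gcd_dvd_left v.1 v.2
    obtain ⟨y, hy⟩ := Int.gcd_dvd_right v.1 v.2
    have := eval_mul_mul f (Int.gcd v.1 v.2) x y
    rw [← hx, ← hy, hv] at this
    exact_mod_cast Dvd.intro _ this.symm
  have hmaps : ∀ v ∈ hfin.toFinset,
      content v ∈ n.divisorsAntidiagonal.filter (fun q => IsSquare q.1) := fun v hv => by
    have := hdvd v (by simpa using hv)
    simp [content, Nat.mul_div_cancel' this, hn, IsSquare.sq]
  rw [numReps, ← Set.coe_ofPred, Nat.card_coe_set_eq, Set.ncard_eq_toFinset_card _ hfin,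
    Finset.card_eq_sum_card_fiberwise hmaps]
  refine Finset.sum_congr rfl fun ⟨d, m⟩ hq => ?_
  obtain ⟨⟨hdm, -⟩, s, rfl⟩ : (d * m = n ∧ n ≠ 0) ∧ IsSquare d := by simpa using hq
  have hs : 0 < s := Nat.pos_of_ne_zero fun h => hn (by simp [← hdm, h])
  rw [← card_reps_gcd_eq f hs, ← Nat.card_eq_finsetCard]
  refine Nat.card_congr (Equiv.subtypeEquivRight fun v => ?_)
  have heval : (n : ℤ) = s ^ 2 * m := by rw [← hdm]; push_cast; ring
  have hgcd : content v = (s * s, m) ↔ Int.gcd v.1 v.2 = s := by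
    refine ⟨fun h => ?_, fun h => ?_⟩
    · exact Nat.pow_left_injective two_ne_zero ((congr_arg Prod.fst h).trans (sq s).symm)
    · simp only [content, h, sq, ← hdm, Nat.mul_div_cancel_left m (Nat.mul_pos hs hs)]
  simp [hgcd, heval]

end BinaryForm

/-- The number of roots of `t² + t + q` in `ℤ/nℤ`. -/
noncomputable def rootCount (q : ℤ) (n : ℕ) : ℕ :=
  Nat.card {t : ZMod n // t ^ 2 + t + q = 0}

namespace BinaryForm

variable {f g : BinaryForm} {q : ℤ} {m : ℕ} [NeZero m]

/-- The form of discriminant `1 - 4q` with leading coefficient `m` attached to a root `t` of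
`t² + t + q` modulo `m`. -/
def rootForm (q : ℤ) (t : ZMod m) : BinaryForm :=
  ⟨m, 2 * t.val + 1, (t.val ^ 2 + t.val + q) / m⟩

theorem disc_rootForm {t : ZMod m} (ht : t ^ 2 + t + q = 0) :
    (rootForm q t).disc = 1 - 4 * q := by
  have hdvd : (m : ℤ) ∣ t.val ^ 2 + t.val + q := by
    rw [← ZMod.intCast_zmod_eq_zero_iff_dvd]
    simpa using ht
  rw [disc, rootForm]
  linear_combination (-4) * Int.mul_ediv_cancel' hdvd

theorem posDef_rootForm (hq : 0 < q) {t : ZMod m} (ht : t ^ 2 + t + q = 0) :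
    (rootForm q t).PosDef :=
  ⟨Int.natCast_pos.mpr (NeZero.pos m), by rw [disc_rootForm ht]; linarith⟩

theorem exists_translation_smul_eq_rootForm (ha : g.a = m) (hD : g.disc = 1 - 4 * q) :
    ∃ (t : ZMod m) (k : ℤ), t ^ 2 + t + q = 0 ∧ translation k • g = rootForm q t := by
  have hm : (m : ℤ) ≠ 0 := by exact_mod_cast NeZero.ne m
  obtain ⟨s, hs⟩ : Odd g.b := by
    have : Odd (g.b ^ 2) := ⟨-2 * q + 2 * g.a * g.c, by rw [disc] at hD; linarith⟩
    simpa [Int.odd_pow] using this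
  have hroot : (s : ZMod m) ^ 2 + s + q = 0 := by
    have hs' : s ^ 2 + s + q = m * g.c := by
      rw [disc, hs, ha] at hD
      linarith
    have := congr_arg (Int.cast : ℤ → ZMod m) hs'
    push_cast at this
    rwa [ZMod.natCast_self, zero_mul] at this
  refine ⟨s, -(s / m), hroot, ext_of_disc ?_ ?_ ?_ ?_⟩
  · rwa [translation_smul_a, ha]
  · rw [translation_smul_a, ha, rootForm]
  · rw [translation_smul_b, hs, ha, rootForm, ZMod.val_intCast, Int.emod_def]
    ring
  · rw [disc_smul, hD, disc_rootForm hroot]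

theorem rootForm_translation_injective {t t' : ZMod m} {k : ℤ}
    (h : translation k • rootForm q t = rootForm q t') : t = t' ∧ k = 0 := by
  have hb := congr_arg BinaryForm.b h
  simp only [translation_smul_b, rootForm] at hb
  have hval : (t'.val : ℤ) = t.val + k * m := by linarith
  have ht : t = t' := by
    have := congr_arg (Int.cast : ℤ → ZMod m) hval
    simpa using this.symm
  refine ⟨ht, ?_⟩
  rw [ht, left_eq_add] at hval
  simpa [NeZero.ne m] using hval

theorem numPrimReps_eq_sum_card_smul_eq (hf : f.PosDef) (hD : f.disc = 1 - 4 * q) :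
    f.numPrimReps m = ∑ t : {t : ZMod m // t ^ 2 + t + q = 0},
      Nat.card {γ : SL(2, ℤ) // γ • f = rootForm q t.1} := by
  let firstRow (p : Σ t : {t : ZMod m // t ^ 2 + t + q = 0},
      {γ : SL(2, ℤ) // γ • f = rootForm q t.1}) :
      {v : ℤ × ℤ // IsCoprime v.1 v.2 ∧ f.eval v.1 v.2 = m} :=
    ⟨(p.2.1 0 0, p.2.1 0 1), p.2.1.isCoprime_row 0, congr_arg a p.2.2⟩
  have hinj : firstRow.Injective := by
    rintro ⟨⟨t, ht⟩, ⟨γ, hγ⟩⟩ ⟨⟨t', ht'⟩, ⟨δ, hδ⟩⟩ h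
    obtain ⟨h₀, h₁⟩ : γ 0 0 = δ 0 0 ∧ γ 0 1 = δ 0 1 := by simpa [firstRow] using h
    obtain ⟨k, rfl⟩ : ∃ k, δ = translation k * γ :=
      exists_eq_translation_mul (funext (Fin.forall_fin_two.mpr ⟨h₀, h₁⟩))
    dsimp only at hγ hδ
    rw [mul_smul, hγ] at hδ
    obtain ⟨rfl, rfl⟩ := rootForm_translation_injective hδ
    simp [translation_zero]
  have hsurj : firstRow.Surjective := by
    rintro ⟨⟨x, y⟩, hco, heval⟩
    obtain ⟨γ, h₀, h₁⟩ := hco.exists_SL2_row 0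
    obtain ⟨t, k, ht, hk⟩ := exists_translation_smul_eq_rootForm (g := γ • f)
      (by rw [smul_a, h₀, h₁, heval]) (by rw [disc_smul, hD])
    refine ⟨⟨⟨t, ht⟩, ⟨translation k * γ, by rw [mul_smul, hk]⟩⟩, Subtype.ext (Prod.ext ?_ ?_)⟩
    · exact (translation_mul_zero k γ 0).trans h₀
    · exact (translation_mul_zero k γ 1).trans h₁
  have hfin : Finite {v : ℤ × ℤ // IsCoprime v.1 v.2 ∧ f.eval v.1 v.2 = m} :=
    (hf.finite_reps m).subset fun _ hv => hv.2
  have (t : {t : ZMod m // t ^ 2 + t + q = 0}) :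
      Finite {γ : SL(2, ℤ) // γ • f = rootForm q t.1} :=
    Finite.of_injective (fun γ => firstRow ⟨t, γ⟩) fun _ _ h => by simpa using hinj h
  rw [numPrimReps, ← Nat.card_eq_of_bijective firstRow ⟨hinj, hsurj⟩, Nat.card_sigma]

theorem sum_numPrimReps_eq {S : Finset BinaryForm} (hq : 0 < q)
    (hS : ∀ f, f ∈ S ↔ f.IsReduced ∧ f.disc = 1 - 4 * q) (hac : ∀ f ∈ S, f.a < f.c) :
    ∑ f ∈ S, f.numPrimReps m = 2 * rootCount q m := by
  calc ∑ f ∈ S, f.numPrimReps m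
      = ∑ f ∈ S, ∑ t : {t : ZMod m // t ^ 2 + t + q = 0},
          Nat.card {γ : SL(2, ℤ) // γ • f = rootForm q t.1} :=
        Finset.sum_congr rfl fun f hf =>
          numPrimReps_eq_sum_card_smul_eq ((hS f).mp hf).1.posDef ((hS f).mp hf).2
    _ = ∑ t : {t : ZMod m // t ^ 2 + t + q = 0}, 2 := by
        rw [Finset.sum_comm]
        exact Finset.sum_congr rfl fun t _ =>
          sum_card_smul_eq hS hac (posDef_rootForm hq t.2) (disc_rootForm t.2)
    _ = 2 * rootCount q m := by
        rw [Finset.sum_const, Finset.card_univ, ← Nat.card_eq_fintype_card, smul_eq_mul, mul_comm,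
          rootCount]

end BinaryForm

/-! ### The Kronecker symbol -/

theorem kron_eq (a : ℤ) (n : ℕ) :
    kron a n = ZMod.χ₈ a ^ n.factorization 2 * jacobiSym a (n / 2 ^ n.factorization 2) := by
  rw [ZMod.χ₈_int_eq_if_mod_eight, kron]

theorem kron_of_odd (a : ℤ) {n : ℕ} (hn : Odd n) : kron a n = jacobiSym a n := by
  have h : n.factorization 2 = 0 := Nat.factorization_eq_zero_of_not_dvd hn.not_two_dvd_nat
  rw [kron_eq, h, pow_zero, pow_zero, Nat.div_one, one_mul]

theorem kron_one (a : ℤ) : kron a 1 = 1 := by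
  rw [kron_of_odd a odd_one, jacobiSym.one_right]

theorem kron_two (a : ℤ) : kron a 2 = ZMod.χ₈ a := by
  simp [kron_eq, Nat.prime_two.factorization]

theorem kron_mul_left (a b : ℤ) (n : ℕ) : kron (a * b) n = kron a n * kron b n := by
  rw [kron_eq, kron_eq, kron_eq, Int.cast_mul, map_mul, mul_pow, jacobiSym.mul_left,
    mul_mul_mul_comm]

theorem kron_mul_right (a : ℤ) {m n : ℕ} (hm : m ≠ 0) (hn : n ≠ 0) :
    kron a (m * n) = kron a m * kron a n := by
  have : NeZero (m / 2 ^ m.factorization 2) := ⟨(Nat.ordCompl_pos 2 hm).ne'⟩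
  have : NeZero (n / 2 ^ n.factorization 2) := ⟨(Nat.ordCompl_pos 2 hn).ne'⟩
  rw [kron_eq, kron_eq, kron_eq, Nat.ordCompl_mul, jacobiSym.mul_right,
    Nat.factorization_mul hm hn, Finsupp.add_apply, pow_add, mul_mul_mul_comm]

theorem kron_pow_right (a : ℤ) {m : ℕ} (hm : m ≠ 0) (k : ℕ) : kron a (m ^ k) = kron a m ^ k := by
  induction k with
  | zero => rw [pow_zero, pow_zero, kron_one]
  | succ k ih => rw [pow_succ, kron_mul_right a (pow_ne_zero k hm) hm, ih, pow_succ]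

theorem kron_prime_eq_zero_of_dvd {a : ℤ} (ha : Odd a) {p : ℕ} (hp : p.Prime) (h : (p : ℤ) ∣ a) :
    kron a p = 0 := by
  have hodd : Odd p := hp.odd_of_ne_two <| by
    rintro rfl
    exact (Int.not_even_iff_odd.mpr ha) (even_iff_two_dvd.mpr h)
  have : NeZero p := ⟨hp.ne_zero⟩
  rw [kron_of_odd a hodd, jacobiSym.eq_zero_iff_not_coprime, ne_eq, ← Int.isCoprime_iff_gcd_eq_one,
    isCoprime_comm, (Nat.prime_iff_prime_int.mp hp).coprime_iff_not_dvd, not_not]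
  exact h

theorem kron_prime_eq_one_or_neg_one {a : ℤ} (ha : Odd a) {p : ℕ} (hp : p.Prime)
    (h : ¬ (p : ℤ) ∣ a) : kron a p = 1 ∨ kron a p = -1 := by
  rcases hp.eq_two_or_odd' with rfl | hodd
  · rw [kron_two, ZMod.χ₈_int_eq_if_mod_eight, if_neg (by rw [Int.odd_iff] at ha; omega)]
    split_ifs <;> simp
  · rw [kron_of_odd a hodd]
    refine jacobiSym.eq_one_or_neg_one (Int.isCoprime_iff_gcd_eq_one.mp ?_)
    exact ((Nat.prime_iff_prime_int.mp hp).coprime_iff_not_dvd.mpr h).symm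

theorem jacobiSym_neg_three {n : ℕ} (hn : Odd n) : jacobiSym (-3) n = legendreSym 3 n := by
  have hmod : (n : ℤ) % (3 : ℕ) = (n % 12 : ℕ) % (3 : ℕ) := by omega
  have hodd : n % 12 % 2 = 1 := by rw [Nat.odd_iff] at hn; omega
  have hlt : n % 12 < 12 := Nat.mod_lt n (by norm_num)
  rw [jacobiSym.mod_right _ hn, legendreSym.mod, hmod, show 4 * (-3 : ℤ).natAbs = 12 from rfl]
  interval_cases n % 12 <;> first | omega | norm_num

theorem kron_neg_three {n : ℕ} (hn : n ≠ 0) : kron (-3) n = legendreSym 3 n := by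
  obtain ⟨k, m, hm, rfl⟩ := Nat.exists_eq_two_pow_mul_odd hn
  have htwo : kron (-3) 2 = legendreSym 3 2 := by
    rw [kron_two, ZMod.χ₈_int_eq_if_mod_eight]
    norm_num
  have hpow : legendreSym 3 (2 ^ k) = legendreSym 3 2 ^ k := map_pow (legendreSym.hom 3) 2 k
  rw [kron_mul_right _ (by positivity) hm.pos.ne', kron_pow_right _ two_ne_zero, htwo,
    kron_of_odd _ hm, jacobiSym_neg_three hm]
  push_cast
  rw [legendreSym.mul, hpow]

/-! ### Roots of `t² + t + q` modulo `n` -/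

theorem card_roots_eq_of_isNilpotent_ker {K R S : Type*} [CommRing K] [CommRing R] [CommRing S]
    [Algebra K R] [Algebra K S] [IsReduced S] {φ : R →ₐ[K] S} (hφ : Function.Surjective φ)
    (hker : ∀ x, φ x = 0 → IsNilpotent x) {P : K[X]}
    (hP : ∀ x : R, IsNilpotent (aeval x P) → IsUnit (aeval x (derivative P))) :
    Nat.card {x : R // aeval x P = 0} = Nat.card {y : S // aeval y P = 0} := by
  refine Nat.card_eq_of_bijective
    (fun x : {x : R // aeval x P = 0} => ⟨φ x, by rw [aeval_algHom_apply, x.2, map_zero]⟩) ⟨?_, ?_⟩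
  · rintro ⟨x, hx⟩ ⟨y, hy⟩ hxy
    have hnil : IsNilpotent (aeval x P) := hx ▸ IsNilpotent.zero
    have hsub : IsNilpotent (x - y) := hker _ (by simpa [sub_eq_zero] using hxy)
    exact Subtype.ext ((existsUnique_nilpotent_sub_and_aeval_eq_zero hnil (hP x hnil)).unique
      ⟨by simp, hx⟩ ⟨hsub, hy⟩)
  · rintro ⟨y, hy⟩
    obtain ⟨x, rfl⟩ := hφ y
    have hnil : IsNilpotent (aeval x P) := hker _ (by rw [← aeval_algHom_apply, hy])
    obtain ⟨r, ⟨hxr, hr⟩, -⟩ := existsUnique_nilpotent_sub_and_aeval_eq_zero hnil (hP x hnil)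
    refine ⟨⟨r, hr⟩, Subtype.ext ?_⟩
    rw [eq_comm, ← sub_eq_zero, ← map_sub]
    exact (hxr.map φ).eq_zero

theorem rootCount_mul (q : ℤ) {m n : ℕ} (h : m.Coprime n) :
    rootCount q (m * n) = rootCount q m * rootCount q n := by
  let e := ZMod.chineseRemainder h
  have he (t : ZMod (m * n)) : t ^ 2 + t + q = 0 ↔
      (e t).1 ^ 2 + (e t).1 + q = 0 ∧ (e t).2 ^ 2 + (e t).2 + q = 0 := by
    rw [← e.injective.eq_iff, map_zero, map_add, map_add, map_pow, map_intCast, Prod.ext_iff]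
    rfl
  rw [rootCount, rootCount, rootCount, ← Nat.card_prod]
  exact Nat.card_congr ((e.toEquiv.subtypeEquiv he).trans Equiv.subtypeProdEquivProd)

theorem rootCount_one (q : ℤ) : rootCount q 1 = 1 := by
  rw [rootCount, Nat.card_eq_one_iff_unique]
  exact ⟨inferInstance, ⟨⟨0, Subsingleton.elim _ _⟩⟩⟩

theorem rootCount_two (q : ℤ) : (rootCount q 2 : ℤ) = 1 + kron (1 - 4 * q) 2 := by
  have hcount : ∀ r : ZMod 2, Fintype.card {t : ZMod 2 // t ^ 2 + t + r = 0} =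
      if r = 0 then 2 else 0 := by decide
  have hcast : (q : ZMod 2) = 0 ↔ (2 : ℤ) ∣ q := by
    exact_mod_cast ZMod.intCast_zmod_eq_zero_iff_dvd q 2
  simp only [rootCount, Nat.card_eq_fintype_card, hcount, hcast, kron_two,
    ZMod.χ₈_int_eq_if_mod_eight]
  split_ifs <;> first | rfl | omega

theorem rootCount_prime (q : ℤ) {p : ℕ} (hp : p.Prime) :
    (rootCount q p : ℤ) = 1 + kron (1 - 4 * q) p := by
  rcases hp.eq_two_or_odd' with rfl | hodd
  · exact rootCount_two q
  have : Fact p.Prime := ⟨hp⟩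
  have hp₂ : p ≠ 2 := by
    rintro rfl
    exact absurd hodd (by decide)
  have h₂ : (2 : ZMod p) ≠ 0 := Ring.two_ne_zero (by rwa [ZMod.ringChar_zmod_n])
  have h₄ : (4 : ZMod p) ≠ 0 := by
    rw [show (4 : ZMod p) = 2 ^ 2 by norm_num]
    exact pow_ne_zero 2 h₂
  let e : ZMod p ≃ ZMod p := (Equiv.mulLeft₀ 2 h₂).trans (Equiv.addRight 1)
  have he (t : ZMod p) : t ^ 2 + t + q = 0 ↔ e t ^ 2 = (1 - 4 * q : ℤ) := by
    change _ ↔ (2 * t + 1) ^ 2 = _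
    rw [← mul_right_inj' h₄, mul_zero, ← sub_eq_zero (a := (2 * t + 1) ^ 2)]
    push_cast
    ring_nf
  rw [kron_of_odd _ hodd, ← jacobiSym.legendreSym.to_jacobiSym, add_comm,
    ← legendreSym.card_sqrts p hp₂, Set.toFinset_card, ← Nat.card_eq_fintype_card, rootCount]
  exact_mod_cast Nat.card_congr (e.subtypeEquiv he)

theorem isNilpotent_of_castHom_eq_zero {p k : ℕ} [NeZero p] (x : ZMod (p ^ (k + 1)))
    (hx : ZMod.castHom (dvd_pow_self p k.succ_ne_zero) (ZMod p) x = 0) : IsNilpotent x := by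
  obtain ⟨c, hc⟩ : p ∣ x.val := by
    rwa [← ZMod.natCast_zmod_val x, map_natCast, ZMod.natCast_eq_zero_iff] at hx
  refine ⟨k + 1, ?_⟩
  rw [← ZMod.natCast_zmod_val x, hc, Nat.cast_mul, mul_pow, ← Nat.cast_pow, ZMod.natCast_self,
    zero_mul]

theorem rootCount_prime_pow_of_not_dvd {q : ℤ} {p : ℕ} (hp : p.Prime)
    (h : ¬ (p : ℤ) ∣ 1 - 4 * q) (k : ℕ) : rootCount q (p ^ (k + 1)) = rootCount q p := by
  have : Fact p.Prime := ⟨hp⟩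
  have hunit : IsUnit ((1 - 4 * q : ℤ) : ZMod (p ^ (k + 1))) := by
    rw [ZMod.coe_int_isUnit_iff_isCoprime, Nat.cast_pow]
    exact ((Nat.prime_iff_prime_int.mp hp).coprime_iff_not_dvd.mpr h).pow_left
  have hderiv (t : ZMod (p ^ (k + 1))) (ht : IsNilpotent (t ^ 2 + t + q)) :
      IsUnit (2 * t + 1) := by
    have hsq : (2 * t + 1) ^ 2 = 4 * (t ^ 2 + t + q) + (1 - 4 * q : ℤ) := by push_cast; ring
    rw [← isUnit_pow_iff two_ne_zero, hsq]
    exact (Commute.isNilpotent_mul_left (Commute.all _ _) ht).isUnit_add_right_of_commute hunit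
      (Commute.all _ _)
  have hdvd : p ∣ p ^ (k + 1) := dvd_pow_self p k.succ_ne_zero
  have hroots := card_roots_eq_of_isNilpotent_ker (P := X ^ 2 + X + C q)
    (φ := (ZMod.castHom hdvd (ZMod p)).toIntAlgHom) (ZMod.castHom_surjective hdvd)
    isNilpotent_of_castHom_eq_zero (by simpa [map_ofNat] using hderiv)
  simpa [rootCount] using hroots

theorem rootCount_prime_pow_of_dvd {q : ℤ} {p : ℕ} (hp : p.Prime) (h : (p : ℤ) ∣ 1 - 4 * q)
    (hsq : ¬ (p : ℤ) ^ 2 ∣ 1 - 4 * q) (k : ℕ) : rootCount q (p ^ (k + 2)) = 0 := by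
  have : NeZero p := ⟨hp.ne_zero⟩
  rw [rootCount, Nat.card_eq_zero]
  refine Or.inl ⟨fun ⟨t, ht⟩ => hsq ?_⟩
  obtain ⟨s, rfl⟩ := ZMod.intCast_surjective t
  have hroot : (p : ℤ) ^ 2 ∣ s ^ 2 + s + q := by
    have : ((s ^ 2 + s + q : ℤ) : ZMod (p ^ (k + 2))) = 0 := by exact_mod_cast ht
    rw [ZMod.intCast_zmod_eq_zero_iff_dvd, Nat.cast_pow] at this
    exact (pow_dvd_pow _ (Nat.le_add_left 2 k)).trans this
  have hdisc : 1 - 4 * q = (2 * s + 1) ^ 2 - 4 * (s ^ 2 + s + q) := by ring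
  have hdvd : (p : ℤ) ∣ 2 * s + 1 := by
    refine (Nat.prime_iff_prime_int.mp hp).dvd_of_dvd_pow (n := 2) ?_
    rw [hdisc] at h
    exact (dvd_sub_left (((dvd_pow_self _ two_ne_zero).trans hroot).mul_left 4)).mp h
  rw [hdisc]
  exact dvd_sub (pow_dvd_pow_of_dvd hdvd 2) (hroot.mul_left 4)

theorem rootCount_prime_pow_succ {q : ℤ} (hq : Squarefree (1 - 4 * q)) {p : ℕ} (hp : p.Prime)
    (k : ℕ) : (rootCount q (p ^ (k + 1)) : ℤ) =
      kron (1 - 4 * q) p ^ (k + 1) + kron (1 - 4 * q) p ^ k := by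
  have hodd : Odd (1 - 4 * q) := ⟨-2 * q, by ring⟩
  by_cases h : (p : ℤ) ∣ 1 - 4 * q
  · rw [kron_prime_eq_zero_of_dvd hodd hp h]
    cases k with
    | zero => simp [rootCount_prime q hp, kron_prime_eq_zero_of_dvd hodd hp h]
    | succ k =>
      have hsq : ¬ (p : ℤ) ^ 2 ∣ 1 - 4 * q := fun hdvd =>
        (Nat.prime_iff_prime_int.mp hp).not_isUnit (hq p (sq (p : ℤ) ▸ hdvd))
      simp [rootCount_prime_pow_of_dvd hp h hsq]
  · rw [rootCount_prime_pow_of_not_dvd hp h, rootCount_prime q hp]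
    rcases kron_prime_eq_one_or_neg_one hodd hp h with h₁ | h₁ <;> rw [h₁]
    · simp
    · ring

/-! ### Total representation numbers -/

/-- The indicator function of the nonzero squares. -/
def squareIndicator : ArithmeticFunction ℤ :=
  ⟨fun n => if n ≠ 0 ∧ IsSquare n then 1 else 0, by simp⟩

/-- `rootCount q` as an arithmetic function, with the value at `0` replaced by `0`. -/
noncomputable def rootCountFun (q : ℤ) : ArithmeticFunction ℤ :=
  ⟨fun n => if n = 0 then 0 else rootCount q n, by simp⟩

/-- `kron D` as an arithmetic function, with the value at `0` replaced by `0`. -/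
def kronFun (D : ℤ) : ArithmeticFunction ℤ :=
  ⟨fun n => if n = 0 then 0 else kron D n, by simp⟩

theorem squareIndicator_apply {n : ℕ} (hn : n ≠ 0) :
    squareIndicator n = if IsSquare n then 1 else 0 := by
  simp [squareIndicator, hn]

theorem rootCountFun_apply (q : ℤ) {n : ℕ} (hn : n ≠ 0) : rootCountFun q n = rootCount q n :=
  if_neg hn

theorem kronFun_apply (D : ℤ) {n : ℕ} (hn : n ≠ 0) : kronFun D n = kron D n :=
  if_neg hn

theorem isSquare_mul_iff_of_coprime {m n : ℕ} (h : m.Coprime n) :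
    IsSquare (m * n) ↔ IsSquare m ∧ IsSquare n := by
  have left_of_mul {a b : ℕ} (hab : a.Coprime b) (hsq : IsSquare (a * b)) : IsSquare a := by
    obtain ⟨c, hc⟩ := hsq
    obtain ⟨d, hd⟩ := exists_eq_pow_of_mul_eq_pow (Nat.isUnit_iff.mpr hab) (hc.trans (sq c).symm)
    exact ⟨d, hd.trans (sq d)⟩
  exact ⟨fun hsq => ⟨left_of_mul h hsq, left_of_mul h.symm (mul_comm m n ▸ hsq)⟩,
    fun hsq => hsq.1.mul hsq.2⟩

theorem isMultiplicative_squareIndicator : squareIndicator.IsMultiplicative := by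
  refine ArithmeticFunction.IsMultiplicative.iff_ne_zero.mpr
    ⟨by simp [squareIndicator_apply], fun {m n} hm hn h => ?_⟩
  rw [squareIndicator_apply hm, squareIndicator_apply hn, squareIndicator_apply (mul_ne_zero hm hn)]
  simp only [isSquare_mul_iff_of_coprime h, ite_and, ite_zero_mul_ite_zero, mul_one]

theorem isMultiplicative_rootCountFun (q : ℤ) : (rootCountFun q).IsMultiplicative := by
  refine ArithmeticFunction.IsMultiplicative.iff_ne_zero.mpr ⟨?_, fun {m n} hm hn h => ?_⟩
  · rw [rootCountFun_apply q one_ne_zero, rootCount_one, Nat.cast_one]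
  · rw [rootCountFun_apply q hm, rootCountFun_apply q hn, rootCountFun_apply q (mul_ne_zero hm hn),
      rootCount_mul q h, Nat.cast_mul]

theorem isMultiplicative_kronFun (D : ℤ) : (kronFun D).IsMultiplicative := by
  refine ArithmeticFunction.IsMultiplicative.iff_ne_zero.mpr ⟨?_, fun {m n} hm hn _ => ?_⟩
  · rw [kronFun_apply D one_ne_zero, kron_one]
  · rw [kronFun_apply D hm, kronFun_apply D hn, kronFun_apply D (mul_ne_zero hm hn),
      kron_mul_right D hm hn]

theorem isMultiplicative_zeta_mul_kronFun (D : ℤ) :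
    ((ζ : ArithmeticFunction ℤ) * kronFun D).IsMultiplicative :=
  ArithmeticFunction.isMultiplicative_zeta.natCast.mul (isMultiplicative_kronFun D)

theorem zeta_mul_kronFun_prime_pow (D : ℤ) {p : ℕ} (hp : p.Prime) (k : ℕ) :
    ((ζ : ArithmeticFunction ℤ) * kronFun D) (p ^ k) =
      ∑ i ∈ Finset.range (k + 1), kron D p ^ i := by
  rw [ArithmeticFunction.coe_zeta_mul_apply, Nat.sum_divisors_prime_pow hp]
  refine Finset.sum_congr rfl fun i _ => ?_
  rw [kronFun_apply D (pow_ne_zero i hp.ne_zero), kron_pow_right D hp.ne_zero]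

theorem isSquare_prime_pow_iff {p : ℕ} (hp : p.Prime) {k : ℕ} : IsSquare (p ^ k) ↔ Even k := by
  refine ⟨fun ⟨r, hr⟩ => ?_, fun hk => hk.isSquare_pow p⟩
  have := congr_arg (fun n => n.factorization p) (hr.trans (sq r).symm)
  simp only [hp.factorization_pow, Nat.factorization_pow] at this
  exact even_iff_two_dvd.mpr ⟨_, by simpa using this⟩

theorem squareIndicator_mul_prime_pow (f : ArithmeticFunction ℤ) {p : ℕ} (hp : p.Prime) (k : ℕ) :
    (squareIndicator * f) (p ^ k) =
      ∑ i ∈ Finset.range (k + 1), if Even i then f (p ^ (k - i)) else 0 := by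
  rw [ArithmeticFunction.mul_apply,
    Nat.sum_divisorsAntidiagonal (fun a b => squareIndicator a * f b),
    Nat.sum_divisors_prime_pow hp]
  refine Finset.sum_congr rfl fun i hi => ?_
  rw [squareIndicator_apply (pow_ne_zero i hp.ne_zero),
    Nat.pow_div (by simpa [Nat.lt_succ_iff] using hi) hp.pos]
  simp only [isSquare_prime_pow_iff hp, ite_mul, one_mul, zero_mul]

theorem sum_ite_even_sub_eq_geom_sum {R : Type*} [Semiring R] {c : ℕ → R} {x : R} (h₀ : c 0 = 1)
    (hc : ∀ k, c (k + 1) = x ^ (k + 1) + x ^ k) (k : ℕ) :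
    ∑ i ∈ Finset.range (k + 1), (if Even i then c (k - i) else 0) =
      ∑ i ∈ Finset.range (k + 1), x ^ i := by
  induction k using Nat.twoStepInduction with
  | zero => simp [-Finset.sum_boole, h₀]
  | one => simp [Finset.sum_range_succ, hc, add_comm]
  | more k ih _ =>
    have hshift (i : ℕ) : (if Even (i + 1 + 1) then c (k + 2 - (i + 1 + 1)) else 0) =
        if Even i then c (k - i) else 0 := by
      rw [show k + 2 - (i + 1 + 1) = k - i by omega]
      simp [Nat.even_add_one]
    rw [Finset.sum_range_succ', Finset.sum_range_succ', Finset.sum_congr rfl fun i _ => hshift i,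
      ih, Finset.sum_range_succ _ (k + 2), Finset.sum_range_succ _ (k + 1)]
    simp [hc, add_comm, add_assoc, add_left_comm]

theorem squareIndicator_mul_rootCountFun {q : ℤ} (hq : Squarefree (1 - 4 * q)) :
    squareIndicator * rootCountFun q = (ζ : ArithmeticFunction ℤ) * kronFun (1 - 4 * q) := by
  rw [ArithmeticFunction.IsMultiplicative.eq_iff_eq_on_prime_powers _
    (isMultiplicative_squareIndicator.mul (isMultiplicative_rootCountFun q)) _
    (isMultiplicative_zeta_mul_kronFun _)]
  intro p k hp
  rw [squareIndicator_mul_prime_pow _ hp, zeta_mul_kronFun_prime_pow _ hp]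
  refine sum_ite_even_sub_eq_geom_sum (c := fun j => rootCountFun q (p ^ j)) ?_ (fun j => ?_) k
  · rw [pow_zero, (isMultiplicative_rootCountFun q).map_one]
  · rw [rootCountFun_apply q (pow_ne_zero _ hp.ne_zero), rootCount_prime_pow_succ hq hp]

theorem BinaryForm.sum_numReps_eq {S : Finset BinaryForm} {q : ℤ} (hq : 0 < q)
    (hsq : Squarefree (1 - 4 * q)) (hS : ∀ f, f ∈ S ↔ f.IsReduced ∧ f.disc = 1 - 4 * q)
    (hac : ∀ f ∈ S, f.a < f.c) {n : ℕ} (hn : n ≠ 0) :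
    ∑ f ∈ S, (f.numReps n : ℤ) = 2 * ∑ d ∈ n.divisors, kron (1 - 4 * q) d := by
  have hprim : ∀ p ∈ n.divisorsAntidiagonal,
      ((∑ f ∈ S, f.numPrimReps p.2 : ℕ) : ℤ) = 2 * rootCountFun q p.2 := fun p hp => by
    have : NeZero p.2 := ⟨(Nat.ne_zero_of_mem_divisorsAntidiagonal hp).2⟩
    rw [sum_numPrimReps_eq hq hS hac, rootCountFun_apply q this.ne, Nat.cast_mul, Nat.cast_two]
  calc ∑ f ∈ S, (f.numReps n : ℤ)
      = ∑ f ∈ S, ∑ p ∈ n.divisorsAntidiagonal with IsSquare p.1, (f.numPrimReps p.2 : ℤ) := by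
        refine Finset.sum_congr rfl fun f hf => ?_
        rw [((hS f).mp hf).1.posDef.numReps_eq_sum_numPrimReps hn, Nat.cast_sum]
    _ = ∑ p ∈ n.divisorsAntidiagonal with IsSquare p.1, 2 * rootCountFun q p.2 := by
        rw [Finset.sum_comm]
        refine Finset.sum_congr rfl fun p hp => ?_
        rw [← hprim p (Finset.mem_filter.mp hp).1, Nat.cast_sum]
    _ = 2 * (squareIndicator * rootCountFun q) n := by
        rw [ArithmeticFunction.mul_apply, Finset.mul_sum, Finset.sum_filter]
        refine Finset.sum_congr rfl fun p hp => ?_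
        rw [squareIndicator_apply (Nat.ne_zero_of_mem_divisorsAntidiagonal hp).1]
        split_ifs <;> simp
    _ = 2 * ∑ d ∈ n.divisors, kron (1 - 4 * q) d := by
        rw [squareIndicator_mul_rootCountFun hsq, ArithmeticFunction.coe_zeta_mul_apply]
        congr 1
        exact Finset.sum_congr rfl fun d hd => kronFun_apply _ (Nat.pos_of_mem_divisors hd).ne.symm

/-! ### Discriminant `-23` -/

theorem A_eq_zeta_mul_kronFun (n : ℕ) : A n = ((ζ : ArithmeticFunction ℤ) * kronFun (-23)) n := by
  rw [A, ArithmeticFunction.coe_zeta_mul_apply]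
  exact Finset.sum_congr rfl fun d hd => (kronFun_apply _ (Nat.pos_of_mem_divisors hd).ne').symm

theorem A_three_pow_mul (k : ℕ) {m : ℕ} (hm : ¬ 3 ∣ m) : A (3 ^ k * m) = (k + 1) * A m := by
  have hco : (3 ^ k).Coprime m := (Nat.prime_three.coprime_iff_not_dvd.mpr hm).pow_left k
  have hkron : kron (-23) 3 = 1 := by
    rw [kron_of_odd _ (by decide)]
    norm_num
  rw [A_eq_zeta_mul_kronFun, A_eq_zeta_mul_kronFun,
    (isMultiplicative_zeta_mul_kronFun _).map_mul_of_coprime hco,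
    zeta_mul_kronFun_prime_pow _ Nat.prime_three, hkron]
  simp

theorem A_three_mul {m : ℕ} (hm : ¬ 3 ∣ m) : A (3 * m) = 2 * A m := by
  simpa [one_add_one_eq_two] using A_three_pow_mul 1 hm

theorem A_nine_mul {m : ℕ} (hm : m ≠ 0) : A (9 * m) = 2 * A (3 * m) - A m := by
  obtain ⟨k, l, hl, rfl⟩ := Nat.exists_eq_pow_mul_and_not_dvd hm 3 (by norm_num)
  rw [show 9 * (3 ^ k * l) = 3 ^ (k + 2) * l by ring,
    show 3 * (3 ^ k * l) = 3 ^ (k + 1) * l by ring, A_three_pow_mul _ hl, A_three_pow_mul _ hl,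
    A_three_pow_mul _ hl]
  push_cast
  ring

theorem B_eq_legendreSym_mul_A (n : ℕ) : B n = legendreSym 3 n * A n := by
  rw [B, A, Finset.mul_sum]
  refine Finset.sum_congr rfl fun d hd => ?_
  rw [show (69 : ℤ) = -23 * -3 by norm_num, kron_mul_left,
    kron_neg_three (Nat.pos_of_mem_divisors hd).ne', mul_assoc, ← legendreSym.mul, ← Nat.cast_mul,
    Nat.mul_div_cancel' (Nat.dvd_of_mem_divisors hd), mul_comm]

theorem A_sub_add_B_eq_ite {n : ℕ} (hn : n ≠ 0) :
    A n - 2 * (if 3 ∣ n then A (n / 3) else 0) + 3 * (if 9 ∣ n then A (n / 9) else 0) + B n =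
      if n % 3 = 1 then 2 * A n else if 9 ∣ n then 2 * A (n / 9) else 0 := by
  have hB : B n = (if n % 3 = 1 then 1 else if n % 3 = 2 then -1 else 0) * A n := by
    have : n % 3 < 3 := Nat.mod_lt n three_pos
    rw [B_eq_legendreSym_mul_A, legendreSym.mod, ← Int.natCast_mod]
    interval_cases n % 3 <;> norm_num
  rw [hB]
  by_cases h₉ : 9 ∣ n
  · obtain ⟨j, rfl⟩ := h₉
    rw [if_pos (by omega), if_pos (by omega), if_neg (by omega), if_neg (by omega),
      if_neg (by omega), if_pos (by omega), Nat.mul_div_cancel_left j (by norm_num),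
      show 9 * j / 3 = 3 * j by omega, A_nine_mul (by omega)]
    ring
  rw [if_neg h₉, if_neg h₉]
  by_cases h₃ : 3 ∣ n
  · obtain ⟨j, rfl⟩ := h₃
    rw [if_pos (by omega), if_neg (by omega), if_neg (by omega), if_neg (by omega),
      Nat.mul_div_cancel_left j three_pos, A_three_mul (by omega)]
    ring
  · rw [if_neg h₃]
    split_ifs <;> omega

namespace BinaryForm

theorem isReduced_and_disc_eq_neg_23_iff (f : BinaryForm) :
    f.IsReduced ∧ f.disc = -23 ↔ f ∈ ({⟨1, 1, 6⟩, ⟨2, 1, 3⟩, ⟨2, -1, 3⟩} : Finset BinaryForm) := by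
  obtain ⟨a, b, c⟩ := f
  simp only [Finset.mem_insert, Finset.mem_singleton, mk.injEq]
  refine ⟨fun ⟨hf, hD⟩ => ?_, ?_⟩
  · have ha : 0 < a := hf.a_pos
    have ha' : a ≤ 2 := by nlinarith [hf.three_mul_sq_le]
    have hb : -a < b := hf.neg_a_lt_b
    have hb' : b ≤ a := hf.b_le_a
    simp only [disc] at hD
    interval_cases a <;> interval_cases b <;> omega
  · rintro (⟨rfl, rfl, rfl⟩ | ⟨rfl, rfl, rfl⟩ | ⟨rfl, rfl, rfl⟩) <;>
      exact ⟨⟨by simp, by simp, by simp⟩, rfl⟩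

theorem sum_numReps_disc_neg_23 {n : ℕ} (hn : n ≠ 0) :
    (numReps ⟨1, 1, 6⟩ n + 2 * numReps ⟨2, 1, 3⟩ n : ℤ) = 2 * A n := by
  have hsq : Squarefree (1 - 4 * 6 : ℤ) := by
    rw [← Int.squarefree_natAbs]
    exact (by norm_num : Nat.Prime 23).prime.squarefree
  calc (numReps ⟨1, 1, 6⟩ n + 2 * numReps ⟨2, 1, 3⟩ n : ℤ)
      = ∑ f ∈ ({⟨1, 1, 6⟩, ⟨2, 1, 3⟩, ⟨2, -1, 3⟩} : Finset BinaryForm), (f.numReps n : ℤ) := by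
        rw [Finset.sum_insert (by decide), Finset.sum_pair (by decide), numReps_neg_b, two_mul]
    _ = 2 * ∑ d ∈ n.divisors, kron (1 - 4 * 6) d :=
        sum_numReps_eq (by norm_num) hsq (fun f => (isReduced_and_disc_eq_neg_23_iff f).symm)
          (by simp) hn
    _ = 2 * A n := rfl

/-! ### Forms of conductor `3` -/

theorem numReps_eq_of_forall_dvd_right {a b c n s : ℤ} (hs : s ≠ 0)
    (h : ∀ x y, eval ⟨a, b, c⟩ x y = n → s ∣ y) :
    numReps ⟨a, s * b, s ^ 2 * c⟩ n = numReps ⟨a, b, c⟩ n := by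
  have heval (x y : ℤ) : eval ⟨a, s * b, s ^ 2 * c⟩ x y = eval ⟨a, b, c⟩ x (s * y) := by
    simp only [eval]; ring
  refine Nat.card_eq_of_bijective (fun v => ⟨(v.1.1, s * v.1.2), heval _ _ ▸ v.2⟩) ⟨?_, ?_⟩
  · rintro ⟨⟨x, y⟩, _⟩ ⟨⟨x', y'⟩, _⟩ h
    simpa [hs] using h
  · rintro ⟨⟨x, y⟩, hv⟩
    obtain ⟨z, rfl⟩ := h x y hv
    exact ⟨⟨(x, z), (heval x z).trans hv⟩, rfl⟩

theorem numReps_eq_of_forall_dvd_left {a b c n s : ℤ} (hs : s ≠ 0)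
    (h : ∀ x y, eval ⟨a, s * b, s ^ 2 * c⟩ x y = s ^ 2 * n → s ∣ x) :
    numReps ⟨a, s * b, s ^ 2 * c⟩ (s ^ 2 * n) = numReps ⟨a, b, c⟩ n := by
  have heval (x y : ℤ) : eval ⟨a, s * b, s ^ 2 * c⟩ (s * x) y = s ^ 2 * eval ⟨a, b, c⟩ x y := by
    simp only [eval]; ring
  refine (Nat.card_eq_of_bijective
    (fun v => ⟨(s * v.1.1, v.1.2), by rw [heval, v.2]⟩) ⟨?_, ?_⟩).symm
  · rintro ⟨⟨x, y⟩, _⟩ ⟨⟨x', y'⟩, _⟩ h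
    simpa [hs] using h
  · rintro ⟨⟨x, y⟩, hv⟩
    obtain ⟨z, rfl⟩ := h x y hv
    exact ⟨⟨(z, y), mul_left_cancel₀ (pow_ne_zero 2 hs) ((heval z y).symm.trans hv)⟩, rfl⟩

theorem sq_emod_three (x : ℤ) : x ^ 2 % 3 = if 3 ∣ x then 0 else 1 := by
  rw [sq, Int.mul_emod]
  obtain h | h | h : x % 3 = 0 ∨ x % 3 = 1 ∨ x % 3 = 2 := by omega
  all_goals rw [h]; split_ifs <;> first | rfl | omega

theorem numReps_of_conductor_three {a b c : ℤ} (ha : a % 3 = 1) (hb : b % 3 = 0) (hc : c % 3 = 2)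
    (n : ℤ) : numReps ⟨a, 3 * b, 3 ^ 2 * c⟩ n =
      if n % 3 = 1 then numReps ⟨a, b, c⟩ n else
        if 9 ∣ n then numReps ⟨a, b, c⟩ (n / 9) else 0 := by
  obtain ⟨a, rfl⟩ : ∃ k, a = 3 * k + 1 := ⟨a / 3, by omega⟩
  obtain ⟨b, rfl⟩ : ∃ k, b = 3 * k := ⟨b / 3, by omega⟩
  obtain ⟨c, rfl⟩ : ∃ k, c = 3 * k + 2 := ⟨c / 3, by omega⟩
  have heval (x y : ℤ) : eval ⟨3 * a + 1, 3 * b, 3 * c + 2⟩ x y =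
      x ^ 2 - y ^ 2 + 3 * (a * x ^ 2 + b * (x * y) + (c + 1) * y ^ 2) := by
    simp only [eval]; ring
  have heval' (x y : ℤ) : eval ⟨3 * a + 1, 3 * (3 * b), 3 ^ 2 * (3 * c + 2)⟩ x y =
      x ^ 2 + 3 * (a * x ^ 2) + 9 * (b * (x * y) + (3 * c + 2) * y ^ 2) := by
    simp only [eval]; ring
  split_ifs with h₁ h₉
  · refine numReps_eq_of_forall_dvd_right three_ne_zero fun x y h => ?_
    have hx := sq_emod_three x
    have hy := sq_emod_three y
    rw [heval] at h
    split_ifs at hx hy <;> omega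
  · obtain ⟨m, rfl⟩ := h₉
    rw [Int.mul_ediv_cancel_left m (by norm_num)]
    refine numReps_eq_of_forall_dvd_left three_ne_zero fun x y h => ?_
    rw [heval'] at h
    have hx := sq_emod_three x
    split_ifs at hx <;> omega
  · rw [numReps, Nat.card_eq_zero]
    refine Or.inl ⟨fun ⟨⟨x, y⟩, h⟩ => ?_⟩
    dsimp only at h
    rw [heval'] at h
    have hx := sq_emod_three x
    split_ifs at hx with h₃
    · obtain ⟨z, rfl⟩ := h₃
      exact h₉ ⟨z ^ 2 + 3 * a * z ^ 2 + b * (3 * z * y) + (3 * c + 2) * y ^ 2,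
        by linear_combination -h⟩
    · omega

theorem numReps_eq_of_smul_eq {f g : BinaryForm} (γ : SL(2, ℤ)) (h : γ • f = g) (n : ℤ) :
    f.numReps n = g.numReps n := by
  rw [← h, numReps_smul]

theorem numReps_one_one_fiftyTwo (n : ℤ) : numReps ⟨1, 1, 52⟩ n =
    if n % 3 = 1 then numReps ⟨1, 1, 6⟩ n else if 9 ∣ n then numReps ⟨1, 1, 6⟩ (n / 9) else 0 := by
  have h₆ : translation 1 • (⟨1, 1, 6⟩ : BinaryForm) = ⟨1, 3, 8⟩ := by decide
  have h₅₂ : translation 4 • (⟨1, 1, 52⟩ : BinaryForm) = ⟨1, 3 * 3, 3 ^ 2 * 8⟩ := by decide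
  simp only [numReps_eq_of_smul_eq _ h₆, numReps_eq_of_smul_eq _ h₅₂]
  exact numReps_of_conductor_three (by norm_num) (by norm_num) (by norm_num) n

theorem numReps_four_one_thirteen (n : ℤ) : numReps ⟨4, 1, 13⟩ n =
    if n % 3 = 1 then numReps ⟨2, 1, 3⟩ n else if 9 ∣ n then numReps ⟨2, 1, 3⟩ (n / 9) else 0 := by
  let γ : SL(2, ℤ) := ⟨!![-1, 1; -1, 0], by decide⟩
  have h₃ : γ • (⟨2, 1, 3⟩ : BinaryForm) = ⟨4, 3, 2⟩ := by decide
  have h₁₃ : translation 1 • (⟨4, 1, 13⟩ : BinaryForm) = ⟨4, 3 * 3, 3 ^ 2 * 2⟩ := by decide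
  simp only [numReps_eq_of_smul_eq _ h₃, numReps_eq_of_smul_eq _ h₁₃]
  exact numReps_of_conductor_three (by norm_num) (by norm_num) (by norm_num) n

theorem sum_numReps_genus_disc_neg_207 {n : ℕ} (hn : n ≠ 0) :
    (numReps ⟨1, 1, 52⟩ n + 2 * numReps ⟨4, 1, 13⟩ n : ℤ) =
      if n % 3 = 1 then 2 * A n else if 9 ∣ n then 2 * A (n / 9) else 0 := by
  rw [numReps_one_one_fiftyTwo, numReps_four_one_thirteen]
  norm_cast
  split_ifs with h₁ h₉
  · exact_mod_cast sum_numReps_disc_neg_23 hn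
  · exact_mod_cast sum_numReps_disc_neg_23 (n := n / 9) (by omega)
  · rfl

end BinaryForm

theorem stmt_19 :
    ∀ n : ℕ, 0 < n →
      (Nat.card {v : ℤ × ℤ //
          v.1 ^ 2 + v.1 * v.2 + 52 * v.2 ^ 2 = (n : ℤ)} : ℤ) +
        2 * (Nat.card {v : ℤ × ℤ //
          4 * v.1 ^ 2 + v.1 * v.2 + 13 * v.2 ^ 2 = (n : ℤ)} : ℤ) =
      A n - 2 * (if 3 ∣ n then A (n / 3) else 0) +
        3 * (if 9 ∣ n then A (n / 9) else 0) + B n := by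
  intro n hn
  rw [A_sub_add_B_eq_ite hn.ne', ← BinaryForm.sum_numReps_genus_disc_neg_207 hn.ne']
  simp only [BinaryForm.numReps, BinaryForm.eval, one_mul]
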